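/- arXiv:1111.2846 — 2 statements merged into one kernel-verified Lean document; each statement's English description precedes it below -/
import Mathlib

section
/- Let ε ∈ (0, 1) and δ ∈ (0, 1), and let z ∈ ℝ satisfy N(0,1)((z, ∞)) = ε, where N(0,1) is the standard Gaussian measure on ℝ. Let T > 0 and v > 0. If v ≥ (z + √(z² + 2·ln(1/δ)))/√T, then the Gaussian measure with mean v²T/2 and variance v²T assigns to the set (ln(1/δ), ∞) a measure at least 1 − ε. -/
/-!
Put `s = v√T` and `L = ln(1/δ)`. If `Z` is standard normal, then `s²/2 - sZ` has law
`N(s²/2, s²) = N(v²T/2, v²T)`. The hypothesis gives `(s - z)² ≥ z² + 2L`, that is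
`L ≤ s²/2 - sz`, so `Z < z` forces `s²/2 - sZ > L`. Since the Gaussian measure has no atoms,
the event `Z < z` has probability exactly `1 - ε`.
-/

open ProbabilityTheory

/-- If `v ≥ (z + √(z² + 2 ln(1/δ)))/√T`, where `z` is the upper `ε`-quantile of the
standard normal distribution, then the Gaussian measure `N(v²T/2, v²T)` assigns to
`(ln(1/δ), ∞)` a measure at least `1 − ε`. -/
theorem beat_index_prob (ε δ : ℝ) (hε : ε ∈ Set.Ioo (0 : ℝ) 1) (hδ : δ ∈ Set.Ioo (0 : ℝ) 1)
    (z : ℝ) (hz : gaussianReal 0 1 (Set.Ioi z) = ENNReal.ofReal ε)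
    (T : ℝ) (hT : 0 < T) (v : ℝ) (hv : 0 < v)
    (h : v ≥ (z + Real.sqrt (z ^ 2 + 2 * Real.log (1 / δ))) / Real.sqrt T) :
    gaussianReal (v ^ 2 * T / 2) ((v ^ 2 * T).toNNReal) (Set.Ioi (Real.log (1 / δ))) ≥
      ENNReal.ofReal (1 - ε) := by
  have hL : 0 < Real.log (1 / δ) := Real.log_pos (one_lt_one_div hδ.1 hδ.2)
  set L := Real.log (1 / δ)
  have hsT : 0 < Real.sqrt T := Real.sqrt_pos.mpr hT
  obtain ⟨s, hs⟩ : ∃ s, s = v * Real.sqrt T := ⟨_, rfl⟩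
  have hs0 : 0 < s := hs ▸ mul_pos hv hsT
  have hs2 : v ^ 2 * T = s ^ 2 := by rw [hs, mul_pow, Real.sq_sqrt hT.le]
  have hsz : z + Real.sqrt (z ^ 2 + 2 * L) ≤ s := by
    rw [hs]; exact (div_le_iff₀ hsT).mp h
  have hkey : L ≤ s ^ 2 / 2 - s * z := by
    have h1 : z ^ 2 + 2 * L ≤ (s - z) ^ 2 :=
      (Real.sqrt_le_left (by linarith [Real.sqrt_nonneg (z ^ 2 + 2 * L)])).mp (by linarith)
    linarith [sub_sq s z]
  have hmap : gaussianReal (s ^ 2 / 2) (s ^ 2).toNNReal =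
      ((gaussianReal 0 1).map (fun x ↦ -s * x)).map (fun x ↦ s ^ 2 / 2 + x) := by
    rw [gaussianReal_map_const_mul, gaussianReal_map_const_add]
    congr 1
    · ring
    · ext
      simp [sq_nonneg]
  have hIio : gaussianReal 0 1 (Set.Iio z) = ENNReal.ofReal (1 - ε) := by
    have := nullSingletonClass_gaussianReal (μ := 0) (v := 1) one_ne_zero
    rw [← Set.compl_Ici, MeasureTheory.prob_compl_eq_one_sub measurableSet_Ici,
      ← MeasureTheory.measure_congr MeasureTheory.Ioi_ae_eq_Ici, hz,
      ENNReal.ofReal_sub _ hε.1.le, ENNReal.ofReal_one]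
  rw [hs2, hmap, MeasureTheory.Measure.map_map (by fun_prop) (by fun_prop),
    MeasureTheory.Measure.map_apply (by fun_prop) measurableSet_Ioi, ← hIio]
  refine MeasureTheory.measure_mono fun x hx ↦ ?_
  have hx' : s * x < s * z := mul_lt_mul_of_pos_left hx hs0
  simp only [Set.mem_preimage, Function.comp_apply, Set.mem_Ioi]
  linarith
end

section
/- Let ε ∈ (0, 1) and δ ∈ (0, 1), and let z > 0 satisfy N(0,1)((z, ∞)) = ε, where N(0,1) is the standard Gaussian measure on ℝ. Let T > 0 and v > 0. If the Gaussian measure with mean v²T/2 and variance v²T assigns to the set (−∞, ln(1/δ)] a measure at least ε, then v < (2z + √(2·ln(1/δ)))/√T. -/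
/-!
Put `s = v√T` and `L = ln(1/δ) > 0`. The measure `N(s²/2, s²)` is the law of `s²/2 - sX` for a
standard normal `X`, so `(−∞, L]` has the measure of `[a, ∞)` under `N(0,1)`, where
`a = s/2 - L/s`. The tail of `N(0,1)` is strictly decreasing, hence a measure at least
`ε = N(0,1)((z, ∞))` forces `a ≤ z`, that is `s(s - 2z) ≤ 2L`. If `s ≥ 2z + √(2L)`, then
`s(s - 2z) ≥ (2z + √(2L))√(2L) > 2L`, a contradiction.
-/

open ProbabilityTheory

/-- The upper tail of the standard normal distribution is strictly decreasing, because the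
distribution charges the interval `(z, a)`. -/
lemma gaussianReal_Ici_lt_Ioi {z a : ℝ} (hza : z < a) :
    gaussianReal 0 1 (Set.Ici a) < gaussianReal 0 1 (Set.Ioi z) := by
  have hpos : gaussianReal 0 1 (Set.Ioo z a) ≠ 0 := fun h0 ↦ by
    have h1 := gaussianReal_absolutelyContinuous' 0 one_ne_zero h0
    rw [Real.volume_Ioo, ENNReal.ofReal_eq_zero] at h1
    linarith
  rw [← Set.Ioo_union_Ici_eq_Ioi hza, MeasureTheory.measure_union _ measurableSet_Ici, add_comm]
  · exact ENNReal.lt_add_right (MeasureTheory.measure_ne_top _ _) hpos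
  · exact Set.disjoint_left.2 fun x hx hx' ↦ not_lt.2 hx' hx.2

/-- Standardization of the lower tail of `N(s²/2, s²)`, through the reflected affine map
`x ↦ s²/2 - sx`. -/
lemma gaussianReal_Iic_eq_Ici {s : ℝ} (hs : 0 < s) (L : ℝ) :
    gaussianReal (s ^ 2 / 2) (s ^ 2).toNNReal (Set.Iic L) =
      gaussianReal 0 1 (Set.Ici (s / 2 - L / s)) := by
  have hmap : gaussianReal (s ^ 2 / 2) (s ^ 2).toNNReal =
      (gaussianReal 0 1).map (fun x ↦ s ^ 2 / 2 + (-s) * x) := by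
    rw [← Function.comp_def (fun x ↦ s ^ 2 / 2 + x) (fun x ↦ (-s) * x),
      ← MeasureTheory.Measure.map_map (by fun_prop) (by fun_prop),
      gaussianReal_map_const_mul, gaussianReal_map_const_add]
    congr 1
    · simp
    · ext
      simp [sq_nonneg]
  rw [hmap, MeasureTheory.Measure.map_apply (by fun_prop) measurableSet_Iic]
  congr 1
  ext x
  have hdiv : s / 2 - L / s = (s ^ 2 / 2 - L) / s := by field_simp
  rw [Set.mem_preimage, Set.mem_Iic, Set.mem_Ici, hdiv, div_le_iff₀ hs]
  constructor <;> intro h <;> linarith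



/-- If the Gaussian measure `N(v²T/2, v²T)` assigns to `(−∞, ln(1/δ)]` a measure at least
`ε`, where `z > 0` is the upper `ε`-quantile of the standard normal distribution, then
`v < (2z + √(2 ln(1/δ)))/√T`. -/
theorem approximate_SCAPM (ε δ : ℝ) (hε : ε ∈ Set.Ioo (0 : ℝ) 1) (hδ : δ ∈ Set.Ioo (0 : ℝ) 1)
    (z : ℝ) (hzpos : 0 < z) (hz : gaussianReal 0 1 (Set.Ioi z) = ENNReal.ofReal ε)
    (T : ℝ) (hT : 0 < T) (v : ℝ) (hv : 0 < v)
    (h : gaussianReal (v ^ 2 * T / 2) ((v ^ 2 * T).toNNReal) (Set.Iic (Real.log (1 / δ))) ≥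
      ENNReal.ofReal ε) :
    v < (2 * z + Real.sqrt (2 * Real.log (1 / δ))) / Real.sqrt T := by
  have hL : 0 < Real.log (1 / δ) :=
    Real.log_pos (by rw [lt_div_iff₀ hδ.1]; linarith [hδ.2])
  set L := Real.log (1 / δ)
  have hrT : 0 < Real.sqrt T := Real.sqrt_pos.2 hT
  have hs : 0 < v * Real.sqrt T := mul_pos hv hrT
  have hs2 : v ^ 2 * T = (v * Real.sqrt T) ^ 2 := by rw [mul_pow, Real.sq_sqrt hT.le]
  rw [lt_div_iff₀ hrT]
  rw [hs2, gaussianReal_Iic_eq_Ici hs, ← hz] at h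
  set s := v * Real.sqrt T
  by_contra! hcon
  refine absurd h (not_le.2 (gaussianReal_Ici_lt_Ioi ?_))
  have hr : 0 < Real.sqrt (2 * L) := Real.sqrt_pos.2 (by linarith)
  have hr2 : Real.sqrt (2 * L) ^ 2 = 2 * L := Real.sq_sqrt (by linarith)
  have hdiv : s / 2 - L / s = (s ^ 2 / 2 - L) / s := by field_simp
  rw [hdiv, lt_div_iff₀ hs]
  -- `s(s - 2z) ≥ s√(2L) ≥ (2z + √(2L))√(2L) > 2L`
  have h1 : s * Real.sqrt (2 * L) ≤ s * (s - 2 * z) :=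
    mul_le_mul_of_nonneg_left (by linarith) hs.le
  have h2 := mul_le_mul_of_nonneg_right hcon hr.le
  have h3 := mul_pos hzpos hr
  linarith
end
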